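/- arXiv:1710.08837 — 2 statements merged into one kernel-verified Lean document; each statement's English description precedes it below -/
import Mathlib

section
/- Let E be a collection of bricks over Λ. Then the set {Filt(Gen(M)) : M ∈ E} is a face of the canonical join complex Γ(tors Λ) if and only if every pair of modules M, M' in E is hom-orthogonal, i.e. Hom_Λ(M, M') = 0 and Hom_Λ(M', M) = 0. -/
/-!
Common definitions: the category `mod Λ` of finite(-dimensional) left `Λ`-modules,
torsion(-free) classes, filtration closures, bricks, minimal (co-)extending modules,
and the lattice-theoretic notions for `tors Λ` (ordered by containment).
-/

/-- A bundled (left) `Λ`-module with carrier in `Type`. -/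
structure Mdl (Λ : Type) [Ring Λ] : Type 1 where
  carrier : Type
  [isAddCommGroup : AddCommGroup carrier]
  [isModule : Module Λ carrier]

attribute [instance] Mdl.isAddCommGroup Mdl.isModule

instance {Λ : Type} [Ring Λ] : CoeSort (Mdl Λ) Type :=
  ⟨Mdl.carrier⟩

variable (Λ : Type) [Ring Λ]

/-- Bundle a module. -/
def Mdl.of (X : Type) [AddCommGroup X] [Module Λ X] : Mdl Λ :=
  { carrier := X }

/-- `M` and `N` are isomorphic `Λ`-modules. -/
def MIso (M N : Mdl Λ) : Prop :=
  Nonempty (M.carrier ≃ₗ[Λ] N.carrier)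

/-- `N` is a factor (quotient) module of `M`. -/
def IsFactor (M N : Mdl Λ) : Prop :=
  ∃ f : M.carrier →ₗ[Λ] N.carrier, Function.Surjective f

/-- `N` is a proper factor of `M` (a quotient by a nonzero submodule). -/
def IsProperFactor (M N : Mdl Λ) : Prop :=
  ∃ f : M.carrier →ₗ[Λ] N.carrier, Function.Surjective f ∧ ¬ Function.Injective f

/-- `N` is (isomorphic to) a submodule of `M`. -/
def IsSubmoduleOf (N M : Mdl Λ) : Prop :=
  ∃ f : N.carrier →ₗ[Λ] M.carrier, Function.Injective f

/-- `N` is (isomorphic to) a proper submodule of `M`. -/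
def IsProperSubmoduleOf (N M : Mdl Λ) : Prop :=
  ∃ f : N.carrier →ₗ[Λ] M.carrier, Function.Injective f ∧ ¬ Function.Surjective f

/-- `D` is (isomorphic to) a direct summand of `N`. -/
def IsSummand (D N : Mdl Λ) : Prop :=
  ∃ (i : D.carrier →ₗ[Λ] N.carrier) (p : N.carrier →ₗ[Λ] D.carrier),
    p.comp i = LinearMap.id

/-- `0 → A --f--> M --g--> B → 0` is a short exact sequence. -/
def IsSES {A M B : Mdl Λ} (f : A.carrier →ₗ[Λ] M.carrier)
    (g : M.carrier →ₗ[Λ] B.carrier) : Prop :=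
  Function.Injective f ∧ Function.Surjective g ∧ LinearMap.range f = LinearMap.ker g

/-- The short exact sequence `0 → A --f--> M --g--> B → 0` splits. -/
def SplitsSES {A M B : Mdl Λ} (_f : A.carrier →ₗ[Λ] M.carrier)
    (g : M.carrier →ₗ[Λ] B.carrier) : Prop :=
  ∃ s : B.carrier →ₗ[Λ] M.carrier, g.comp s = LinearMap.id

/-- `M` is an extension of `B` by `A`, i.e. there is a s.e.s. `0 → A → M → B → 0`. -/
def ExtOf (M A B : Mdl Λ) : Prop :=
  ∃ (f : A.carrier →ₗ[Λ] M.carrier) (g : M.carrier →ₗ[Λ] B.carrier), IsSES Λ f g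

/-- A torsion class in `mod Λ`: a class of finite(-dimensional) modules containing `0`
and closed under isomorphisms, factor modules and extensions. -/
structure IsTorsionClass (T : Set (Mdl Λ)) : Prop where
  fin : ∀ M ∈ T, Module.Finite Λ M.carrier
  zero_mem : ∀ M : Mdl Λ, Subsingleton M.carrier → M ∈ T
  iso_closed : ∀ M ∈ T, ∀ N : Mdl Λ, MIso Λ M N → N ∈ T
  factor_closed : ∀ M ∈ T, ∀ N : Mdl Λ, IsFactor Λ M N → N ∈ T
  ext_closed : ∀ A ∈ T, ∀ B ∈ T, ∀ M : Mdl Λ, ExtOf Λ M A B → M ∈ T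

/-- A torsion-free class in `mod Λ`: a class of finite(-dimensional) modules containing `0`
and closed under isomorphisms, submodules and extensions. -/
structure IsTorsionFreeClass (F : Set (Mdl Λ)) : Prop where
  fin : ∀ M ∈ F, Module.Finite Λ M.carrier
  zero_mem : ∀ M : Mdl Λ, Subsingleton M.carrier → M ∈ F
  iso_closed : ∀ M ∈ F, ∀ N : Mdl Λ, MIso Λ M N → N ∈ F
  sub_closed : ∀ M ∈ F, ∀ N : Mdl Λ, IsSubmoduleOf Λ N M → N ∈ F
  ext_closed : ∀ A ∈ F, ∀ B ∈ F, ∀ M : Mdl Λ, ExtOf Λ M A B → M ∈ F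

/-- `Filt S M`: `M` admits a filtration `0 = M₀ ⊆ M₁ ⊆ ⋯ ⊆ M_l = M` whose successive
quotients are isomorphic to modules in `S`. -/
inductive Filt (S : Set (Mdl Λ)) : Mdl Λ → Prop
  | of_subsingleton (M : Mdl Λ) (h : Subsingleton M.carrier) : Filt S M
  | step (M : Mdl Λ) (N : Submodule Λ M.carrier) (X : Mdl Λ) (hX : X ∈ S)
      (hN : Filt S (Mdl.of Λ N)) (e : Nonempty ((M.carrier ⧸ N) ≃ₗ[Λ] X.carrier)) :
      Filt S M

/-- The filtration closure `Filt(S)` as a set of modules. -/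
def FiltSet (S : Set (Mdl Λ)) : Set (Mdl Λ) := {M | Filt Λ S M}

/-- `Gen(M)`: the class of factor modules of finite direct sums of copies of `M`. -/
def GenSet (M : Mdl Λ) : Set (Mdl Λ) :=
  {N | ∃ (n : ℕ) (f : (Fin n → M.carrier) →ₗ[Λ] N.carrier), Function.Surjective f}

/-- `T^⊥ = {X ∈ mod Λ : Hom_Λ(N, X) = 0 for all N ∈ T}`. -/
def Perp (T : Set (Mdl Λ)) : Set (Mdl Λ) :=
  {X | Module.Finite Λ X.carrier ∧ ∀ N ∈ T, ∀ f : N.carrier →ₗ[Λ] X.carrier, f = 0}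

/-- A brick: a module (in `mod Λ`) whose endomorphism ring is a division ring,
i.e. it is nonzero and every nonzero endomorphism is invertible. -/
def IsBrick (M : Mdl Λ) : Prop :=
  Module.Finite Λ M.carrier ∧ Nontrivial M.carrier ∧
    ∀ f : M.carrier →ₗ[Λ] M.carrier, f ≠ 0 → Function.Bijective f

/-- An indecomposable module: nonzero, and not the direct sum of two nonzero submodules. -/
def Indec (M : Mdl Λ) : Prop :=
  Nontrivial M.carrier ∧
    ∀ p q : Submodule Λ M.carrier, IsCompl p q → p = ⊥ ∨ q = ⊥

/-- `M` is a minimal extending module for the torsion class `T`: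
(P1) every proper factor of `M` is in `T`;
(P2) if `0 → M → X → N → 0` is non-split exact with `N ∈ T`, then `X ∈ T`;
(P3) `Hom_Λ(T, M) = 0`. -/
structure IsMinExt (T : Set (Mdl Λ)) (M : Mdl Λ) : Prop where
  fin : Module.Finite Λ M.carrier
  p1 : ∀ N : Mdl Λ, IsProperFactor Λ M N → N ∈ T
  p2 : ∀ (X N : Mdl Λ) (f : M.carrier →ₗ[Λ] X.carrier) (g : X.carrier →ₗ[Λ] N.carrier),
      IsSES Λ f g → ¬ SplitsSES Λ f g → N ∈ T → X ∈ T
  p3 : ∀ N ∈ T, ∀ f : N.carrier →ₗ[Λ] M.carrier, f = 0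

/-- `M` is a minimal co-extending module for the torsion-free class `F`:
(P1') every proper submodule of `M` is in `F`;
(P2') if `0 → F' → X → M → 0` is non-split exact with `F' ∈ F`, then `X ∈ F`;
(P3') `Hom_Λ(M, F) = 0`. -/
structure IsMinCoExt (F : Set (Mdl Λ)) (M : Mdl Λ) : Prop where
  fin : Module.Finite Λ M.carrier
  p1 : ∀ N : Mdl Λ, IsProperSubmoduleOf Λ N M → N ∈ F
  p2 : ∀ (X F' : Mdl Λ) (f : F'.carrier →ₗ[Λ] X.carrier) (g : X.carrier →ₗ[Λ] M.carrier),
      IsSES Λ f g → ¬ SplitsSES Λ f g → F' ∈ F → X ∈ F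
  p3 : ∀ F' ∈ F, ∀ f : M.carrier →ₗ[Λ] F'.carrier, f = 0

/-- `T'` covers `T` in the lattice `tors Λ` of torsion classes ordered by containment. -/
def TorsCovers (T' T : Set (Mdl Λ)) : Prop :=
  IsTorsionClass Λ T' ∧ IsTorsionClass Λ T ∧ T ⊂ T' ∧
    ∀ Y : Set (Mdl Λ), IsTorsionClass Λ Y → T ⊂ Y → Y ⊆ T' → Y = T'

/-- `F'` covers `F` in the lattice `torf Λ` of torsion-free classes ordered by containment. -/
def TorfCovers (F' F : Set (Mdl Λ)) : Prop :=
  IsTorsionFreeClass Λ F' ∧ IsTorsionFreeClass Λ F ∧ F ⊂ F' ∧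
    ∀ Y : Set (Mdl Λ), IsTorsionFreeClass Λ Y → F ⊂ Y → Y ⊆ F' → Y = F'

/-- The join `⋁ A` of a family of torsion classes in `tors Λ`: the smallest torsion
class containing all members of `A`. -/
def TorsJoin (A : Set (Set (Mdl Λ))) : Set (Mdl Λ) :=
  ⋂₀ {T : Set (Mdl Λ) | IsTorsionClass Λ T ∧ ∀ S ∈ A, S ⊆ T}

/-- A completely join-irreducible element of `tors Λ`: a torsion class `T` such that
`T ∈ A` whenever `A` is a set of torsion classes with `⋁ A = T`. -/
def CompletelyJoinIrred (T : Set (Mdl Λ)) : Prop :=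
  IsTorsionClass Λ T ∧
    ∀ A : Set (Set (Mdl Λ)), (∀ S ∈ A, IsTorsionClass Λ S) → TorsJoin Λ A = T → T ∈ A

/-- The join representation `⋁ A` is irredundant in `tors Λ`:
every proper subset has strictly smaller join. -/
def TorsIrredundant (A : Set (Set (Mdl Λ))) : Prop :=
  ∀ B : Set (Set (Mdl Λ)), B ⊂ A → TorsJoin Λ B ⊂ TorsJoin Λ A

/-- `A` is the canonical join representation of its join in `tors Λ` (equivalently, a face
of the canonical join complex `Γ(tors Λ)`): `⋁ A` is irredundant, and `A ≪ B` for every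
irredundant join representation `⋁ B` of the same element. -/
def TorsCJR (A : Set (Set (Mdl Λ))) : Prop :=
  (∀ S ∈ A, IsTorsionClass Λ S) ∧ TorsIrredundant Λ A ∧
    ∀ B : Set (Set (Mdl Λ)), (∀ S ∈ B, IsTorsionClass Λ S) →
      TorsJoin Λ B = TorsJoin Λ A → TorsIrredundant Λ B → ∀ a ∈ A, ∃ b ∈ B, a ⊆ b

/-- `M` and `N` are hom-orthogonal: `Hom_Λ(M, N) = 0` and `Hom_Λ(N, M) = 0`. -/
def HomOrthogonal (M N : Mdl Λ) : Prop :=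
  (∀ f : M.carrier →ₗ[Λ] N.carrier, f = 0) ∧ ∀ f : N.carrier →ₗ[Λ] M.carrier, f = 0

section Helpers
variable {Λ}

theorem tc_ext' {T : Set (Mdl Λ)} (hT : IsTorsionClass Λ T) (M : Mdl Λ)
    (N : Submodule Λ M.carrier) (h1 : Mdl.of Λ N ∈ T) (h2 : Mdl.of Λ (M.carrier ⧸ N) ∈ T) :
    M ∈ T := by
  refine hT.ext_closed _ h1 _ h2 M ⟨N.subtype, N.mkQ, ?_, ?_, ?_⟩
  · exact N.injective_subtype
  · exact N.mkQ_surjective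
  · exact (N.range_subtype).trans (N.ker_mkQ).symm

theorem pi_mem {T : Set (Mdl Λ)} (hT : IsTorsionClass Λ T) (M : Mdl Λ) (hM : M ∈ T) (n : ℕ) :
    Mdl.of Λ (Fin n → M.carrier) ∈ T := by
  induction n with
  | zero =>
    apply hT.zero_mem
    show Subsingleton (Fin 0 → M.carrier)
    infer_instance
  | succ n ih =>
    refine hT.ext_closed _ hM _ ih _ ⟨LinearMap.single Λ (fun _ => M.carrier) 0,
      LinearMap.funLeft Λ M.carrier Fin.succ, ?_, ?_, ?_⟩
    · exact Pi.single_injective (M := fun _ : Fin (n+1) => M.carrier) 0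
    · exact LinearMap.funLeft_surjective_of_injective _ _ _ (Fin.succ_injective n)
    · show LinearMap.range (LinearMap.single Λ (fun _ : Fin (n+1) => M.carrier) 0) =
        LinearMap.ker (LinearMap.funLeft Λ M.carrier (Fin.succ : Fin n → Fin (n+1)))
      ext x
      constructor
      · rintro ⟨y, rfl⟩
        rw [LinearMap.mem_ker]
        ext i
        simp [LinearMap.funLeft_apply]
      · intro h
        rw [LinearMap.mem_ker] at h
        refine ⟨x 0, ?_⟩
        funext i
        refine Fin.cases ?_ (fun j => ?_) i
        · simp
        · have := congrFun h j
          simp [LinearMap.funLeft_apply] at this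
          simp [this]

theorem gen_subset {T : Set (Mdl Λ)} (hT : IsTorsionClass Λ T) (M : Mdl Λ) (hM : M ∈ T) :
    GenSet Λ M ⊆ T := by
  rintro N ⟨n, f, hf⟩
  exact hT.factor_closed _ (pi_mem hT M hM n) N ⟨f, hf⟩

theorem filt_subset {T : Set (Mdl Λ)} (hT : IsTorsionClass Λ T) (M : Mdl Λ) (hM : M ∈ T) :
    FiltSet Λ (GenSet Λ M) ⊆ T := by
  intro X hX
  have hX : Filt Λ (GenSet Λ M) X := hX
  induction hX with
  | of_subsingleton X h => exact hT.zero_mem X h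
  | step X N Y hY hN e ih =>
    obtain ⟨e⟩ := e
    exact tc_ext' hT X N (ih hN) (hT.iso_closed _ (gen_subset hT M hM hY) _ ⟨e.symm⟩)

theorem mem_gen_factor {M X Y : Mdl Λ} (hX : X ∈ GenSet Λ M) (h : IsFactor Λ X Y) :
    Y ∈ GenSet Λ M := by
  obtain ⟨n, f, hf⟩ := hX
  obtain ⟨g, hg⟩ := h
  exact ⟨n, g.comp f, hg.comp hf⟩

theorem filt_factor {M X : Mdl Λ} (hX : Filt Λ (GenSet Λ M) X) :
    ∀ Y : Mdl Λ, IsFactor Λ X Y → Filt Λ (GenSet Λ M) Y := by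
  induction hX with
  | of_subsingleton X h =>
    rintro Y ⟨f, hf⟩
    exact Filt.of_subsingleton Y hf.subsingleton
  | step X N Z hZ hN e ih =>
    rintro Y ⟨f, hf⟩
    obtain ⟨e⟩ := e
    refine Filt.step Y (N.map f) (Mdl.of Λ (Y.carrier ⧸ N.map f)) ?_ (ih _ ?_)
      ⟨LinearEquiv.refl _ _⟩
    · refine mem_gen_factor hZ ⟨(N.mapQ (N.map f) f (Submodule.le_comap_map f N)).comp
        (e.symm : Z.carrier →ₗ[Λ] _), ?_⟩
      have h1 : Function.Surjective (N.mapQ (N.map f) f (Submodule.le_comap_map f N)) := by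
        intro y
        obtain ⟨y, rfl⟩ := Submodule.mkQ_surjective _ y
        obtain ⟨x, rfl⟩ := hf y
        exact ⟨N.mkQ x, rfl⟩
      exact h1.comp e.symm.surjective
    · refine ⟨f.submoduleMap N, f.submoduleMap_surjective N⟩

theorem filt_ext {M A B : Mdl Λ} (hA : Filt Λ (GenSet Λ M) A) (hB : Filt Λ (GenSet Λ M) B) :
    ∀ X : Mdl Λ, ExtOf Λ X A B → Filt Λ (GenSet Λ M) X := by
  induction hB with
  | of_subsingleton B h =>
    rintro X ⟨f, g, hf, hg, hfg⟩
    refine filt_factor hA X ⟨f, ?_⟩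
    rw [← LinearMap.range_eq_top, hfg, LinearMap.ker_eq_top]
    ext x
    exact Subsingleton.elim _ _
  | step B N Z hZ hN e ih =>
    rintro X ⟨f, g, hf, hg, hfg⟩
    obtain ⟨e⟩ := e
    have hfk : ∀ a, g (f a) = 0 := fun a => by
      have : f a ∈ LinearMap.ker g := hfg ▸ LinearMap.mem_range_self f a
      exact this
    refine Filt.step X (N.comap g) (Mdl.of Λ (X.carrier ⧸ N.comap g)) ?_ (ih _ ?_)
      ⟨LinearEquiv.refl _ _⟩
    · have hinj : Function.Injective ((N.comap g).mapQ N g le_rfl) := by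
        rw [← LinearMap.ker_eq_bot, Submodule.ker_mapQ]
        exact Submodule.mkQ_map_self _
      have hsur : Function.Surjective ((N.comap g).mapQ N g le_rfl) := by
        intro y
        obtain ⟨y, rfl⟩ := Submodule.mkQ_surjective _ y
        obtain ⟨x, rfl⟩ := hg y
        exact ⟨(N.comap g).mkQ x, rfl⟩
      let e' := LinearEquiv.ofBijective _ ⟨hinj, hsur⟩
      exact mem_gen_factor hZ ⟨(e.symm.trans e'.symm).toLinearMap,
        (e.symm.trans e'.symm).surjective⟩
    · refine ⟨f.codRestrict (N.comap g) (fun a => ?_), g.restrict (p := N.comap g) (q := N)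
        (fun x hx => hx), ?_, ?_, ?_⟩
      · rw [Submodule.mem_comap, hfk]
        exact N.zero_mem
      · intro a b hab
        exact hf (congrArg Subtype.val hab)
      · rintro ⟨y, hy⟩
        obtain ⟨x, rfl⟩ := hg y
        exact ⟨⟨x, hy⟩, rfl⟩
      · apply Submodule.ext
        rintro ⟨x, hx⟩
        constructor
        · rintro ⟨a, ha⟩
          have ha : f a = x := congrArg Subtype.val ha
          subst ha
          exact Subtype.ext (hfk a)
        · intro h
          have h : g x = 0 := congrArg Subtype.val h
          have : x ∈ LinearMap.range f := hfg ▸ h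
          obtain ⟨a, ha⟩ := this
          exact ⟨a, Subtype.ext ha⟩

theorem ses_finite {A B X : Mdl Λ} (hA : Module.Finite Λ A.carrier)
    (hB : Module.Finite Λ B.carrier) (h : ExtOf Λ X A B) : Module.Finite Λ X.carrier := by
  obtain ⟨f, g, hf, hg, hfg⟩ := h
  have h1 : Module.Finite Λ (LinearMap.ker g) := by
    rw [← hfg]
    infer_instance
  have h2 : Module.Finite Λ (X.carrier ⧸ LinearMap.ker g) :=
    Module.Finite.equiv (g.quotKerEquivOfSurjective hg).symm
  exact Module.Finite.of_submodule_quotient (LinearMap.ker g)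

theorem fin_tc : IsTorsionClass Λ {X : Mdl Λ | Module.Finite Λ X.carrier} where
  fin := fun _ h => h
  zero_mem := fun X h => by
    show Module.Finite Λ X.carrier
    infer_instance
  iso_closed := fun X h Y ⟨e⟩ => by
    have : Module.Finite Λ X.carrier := h
    exact Module.Finite.equiv e
  factor_closed := fun X h Y ⟨f, hf⟩ => by
    have : Module.Finite Λ X.carrier := h
    exact Module.Finite.of_surjective f hf
  ext_closed := fun A hA B hB X h => ses_finite hA hB h

theorem filt_tc {M : Mdl Λ} (hM : Module.Finite Λ M.carrier) :
    IsTorsionClass Λ (FiltSet Λ (GenSet Λ M)) where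
  fin := fun X h => filt_subset fin_tc M hM h
  zero_mem := fun X h => Filt.of_subsingleton X h
  iso_closed := fun X h Y ⟨e⟩ => filt_factor h Y ⟨e, e.surjective⟩
  factor_closed := fun X h Y hf => filt_factor h Y hf
  ext_closed := fun A hA B hB X h => filt_ext hA hB X h

theorem self_mem (M : Mdl Λ) : M ∈ FiltSet Λ (GenSet Λ M) := by
  refine Filt.step M ⊥ M ⟨1, LinearMap.proj 0, fun x => ⟨fun _ => x, rfl⟩⟩ 
    (Filt.of_subsingleton _ ?_) ⟨Submodule.quotEquivOfEqBot ⊥ rfl⟩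
  show Subsingleton (⊥ : Submodule Λ M.carrier)
  infer_instance

/-- Modules all of whose maps to `M` are zero or satisfy surjectivity if `b`. -/
def ZS (b : Prop) (M : Mdl Λ) : Set (Mdl Λ) :=
  {X | Module.Finite Λ X.carrier ∧ ∀ f : X.carrier →ₗ[Λ] M.carrier,
    f = 0 ∨ (b ∧ Function.Surjective f)}

theorem zs_factor {b : Prop} {M X Y : Mdl Λ} (h : X ∈ ZS b M) (hf : IsFactor Λ X Y) :
    Y ∈ ZS b M := by
  obtain ⟨f, hf⟩ := hf
  obtain ⟨h1, h2⟩ := h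
  refine ⟨Module.Finite.of_surjective f hf, fun g => ?_⟩
  rcases h2 (g.comp f) with h | ⟨hb, h⟩
  · left
    ext y
    obtain ⟨x, rfl⟩ := hf y
    exact LinearMap.congr_fun h x
  · right
    refine ⟨hb, ?_⟩
    rw [LinearMap.coe_comp] at h
    exact h.of_comp

theorem zs_tc (b : Prop) (M : Mdl Λ) : IsTorsionClass Λ (ZS b M) where
  fin := fun X h => h.1
  zero_mem := fun X h => ⟨fin_tc.zero_mem X h, fun f => Or.inl (by
    ext x
    rw [Subsingleton.elim x 0, map_zero, map_zero])⟩
  iso_closed := fun X h Y ⟨e⟩ => zs_factor h ⟨e, e.surjective⟩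
  factor_closed := fun X h Y hf => zs_factor h hf
  ext_closed := by
    rintro A ⟨hA, hA'⟩ B ⟨hB, hB'⟩ X hX
    refine ⟨ses_finite hA hB hX, fun u => ?_⟩
    obtain ⟨f, g, hf, hg, hfg⟩ := hX
    rcases hA' (u.comp f) with h | ⟨hb, h⟩
    · have hle : LinearMap.ker g ≤ LinearMap.ker u := by
        rw [← hfg]
        rintro _ ⟨a, rfl⟩
        exact LinearMap.congr_fun h a
      let v : B.carrier →ₗ[Λ] M.carrier :=
        ((LinearMap.ker g).liftQ u hle).comp
          (g.quotKerEquivOfSurjective hg).symm.toLinearMap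
      have hv : ∀ x, v (g x) = u x := by
        intro x
        have : (g.quotKerEquivOfSurjective hg).symm (g x) = (LinearMap.ker g).mkQ x := by
          rw [LinearEquiv.symm_apply_eq]
          rfl
        show ((LinearMap.ker g).liftQ u hle) ((g.quotKerEquivOfSurjective hg).symm (g x)) = u x
        rw [this]
        rfl
      rcases hB' v with h0 | ⟨hb, hs⟩
      · left
        ext x
        rw [← hv, h0]
        rfl
      · right
        refine ⟨hb, fun m => ?_⟩
        obtain ⟨y, rfl⟩ := hs m
        obtain ⟨x, rfl⟩ := hg y
        exact ⟨x, (hv x).symm⟩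
    · right
      refine ⟨hb, ?_⟩
      rw [LinearMap.coe_comp] at h
      exact h.of_comp

theorem join_tc {A : Set (Set (Mdl Λ))} (hA : ∀ S ∈ A, IsTorsionClass Λ S) :
    IsTorsionClass Λ (TorsJoin Λ A) where
  fin := fun X h => h _ ⟨fin_tc, fun S hS Y hY => (hA S hS).fin Y hY⟩
  zero_mem := fun X h T hT => hT.1.zero_mem X h
  iso_closed := fun X h Y e T hT => hT.1.iso_closed X (h T hT) Y e
  factor_closed := fun X h Y e T hT => hT.1.factor_closed X (h T hT) Y e
  ext_closed := fun X hX Y hY Z e T hT => hT.1.ext_closed X (hX T hT) Y (hY T hT) Z e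

theorem join_le {A : Set (Set (Mdl Λ))} {T : Set (Mdl Λ)} (hT : IsTorsionClass Λ T)
    (h : ∀ S ∈ A, S ⊆ T) : TorsJoin Λ A ⊆ T := fun _ hX => hX T ⟨hT, h⟩

theorem le_join {A : Set (Set (Mdl Λ))} {S : Set (Mdl Λ)} (h : S ∈ A) : S ⊆ TorsJoin Λ A :=
  fun _ hX _ hT => hT.2 S h hX

theorem brick_not_zs {M : Mdl Λ} (hM : IsBrick Λ M) : M ∉ ZS False M := by
  rintro ⟨-, h⟩
  obtain ⟨-, hn, -⟩ := hM
  rcases h LinearMap.id with h | ⟨h, -⟩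
  · obtain ⟨x, hx⟩ := exists_ne (0 : M.carrier)
    exact hx (LinearMap.congr_fun h x)
  · exact h

theorem brick_zs {M : Mdl Λ} (hM : IsBrick Λ M) : M ∈ ZS True M := by
  refine ⟨hM.1, fun f => ?_⟩
  by_cases hf : f = 0
  · exact Or.inl hf
  · exact Or.inr ⟨trivial, (hM.2.2 f hf).2⟩

theorem exists_hom {X M : Mdl Λ} (hM : IsBrick Λ M) (hX : Module.Finite Λ X.carrier)
    (h : M ∈ FiltSet Λ (GenSet Λ X)) : ∃ f : X.carrier →ₗ[Λ] M.carrier, f ≠ 0 := by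
  by_contra! hc
  exact brick_not_zs hM (filt_subset (zs_tc False M) X ⟨hX, fun f => Or.inl (hc f)⟩ h)

theorem exists_surj {M M' : Mdl Λ} (hM : IsBrick Λ M) (hM' : IsBrick Λ M')
    (h : FiltSet Λ (GenSet Λ M) = FiltSet Λ (GenSet Λ M')) :
    ∃ f : M.carrier →ₗ[Λ] M'.carrier, Function.Surjective f := by
  obtain ⟨f, hf⟩ := exists_hom hM' hM.1 (h ▸ self_mem M')
  have h1 : M ∈ FiltSet Λ (GenSet Λ M') := h ▸ self_mem M
  have h2 := filt_subset (zs_tc True M') M' (brick_zs hM') h1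
  rcases h2.2 f with h3 | h3
  · exact absurd h3 hf
  · exact ⟨f, h3.2⟩

theorem iso_of_eq {M M' : Mdl Λ} (hM : IsBrick Λ M) (hM' : IsBrick Λ M')
    (h : FiltSet Λ (GenSet Λ M) = FiltSet Λ (GenSet Λ M')) : MIso Λ M M' := by
  obtain ⟨f, hf⟩ := exists_surj hM hM' h
  obtain ⟨g, hg⟩ := exists_surj hM' hM h.symm
  obtain ⟨-, hn, hb⟩ := hM
  have hs : Function.Surjective (g.comp f) := hg.comp hf
  have h0 : g.comp f ≠ 0 := by
    intro h0
    obtain ⟨x, hx⟩ := exists_ne (0 : M.carrier)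
    obtain ⟨y, rfl⟩ := hs x
    exact hx (LinearMap.congr_fun h0 y)
  have hi := (hb _ h0).1
  rw [LinearMap.coe_comp] at hi
  exact ⟨LinearEquiv.ofBijective f ⟨hi.of_comp, hf⟩⟩

theorem hom_zero (E : Set (Mdl Λ)) (hE : ∀ M ∈ E, IsBrick Λ M)
    (hnoniso : ∀ M ∈ E, ∀ M' ∈ E, M ≠ M' → ¬ MIso Λ M M')
    (hC : TorsCJR Λ ((fun M : Mdl Λ => FiltSet Λ (GenSet Λ M)) '' E))
    (M : Mdl Λ) (hM : M ∈ E) (M' : Mdl Λ) (hM' : M' ∈ E) (hne : M ≠ M')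
    (f : M.carrier →ₗ[Λ] M'.carrier) : f = 0 := by
  by_contra hf
  obtain ⟨hT, hirr, hcan⟩ := hC
  set A := (fun M : Mdl Λ => FiltSet Λ (GenSet Λ M)) '' E with hAdef
  set S := FiltSet Λ (GenSet Λ M) with hS
  set S' := FiltSet Λ (GenSet Λ M') with hS'
  have hSA : S ∈ A := ⟨M, hM, rfl⟩
  have hSA' : S' ∈ A := ⟨M', hM', rfl⟩
  have hSS : S ≠ S' := fun h => hnoniso M hM M' hM' hne (iso_of_eq (hE M hM) (hE M' hM') h)
  have hfin' : Module.Finite Λ M'.carrier := (hE M' hM').1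
  let Q : Mdl Λ := Mdl.of Λ (M'.carrier ⧸ LinearMap.range f)
  have hQfin : Module.Finite Λ Q.carrier :=
    inferInstanceAs (Module.Finite Λ (M'.carrier ⧸ LinearMap.range f))
  have hQS' : Q ∈ S' := (filt_tc hfin').factor_closed M' (self_mem M') Q
    ⟨(LinearMap.range f).mkQ, Submodule.mkQ_surjective _⟩
  set T' := FiltSet Λ (GenSet Λ Q) with hT'
  have hT'tc : IsTorsionClass Λ T' := filt_tc hQfin
  have hT'S' : T' ⊆ S' := filt_subset (filt_tc hfin') Q hQS'
  set W := TorsJoin Λ (A \ {S'}) with hW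
  have hWtc : IsTorsionClass Λ W := join_tc (fun X hX => hT X hX.1)
  have hWlt : W ⊂ TorsJoin Λ A := by
    apply hirr
    refine ⟨Set.sdiff_subset, fun h => ?_⟩
    exact (h hSA').2 rfl
  have hSW : S ⊆ W := le_join ⟨hSA, hSS⟩
  have hwtc : IsTorsionClass Λ (TorsJoin Λ A) := join_tc hT
  have hS'lt : S' ⊂ TorsJoin Λ A := by
    have h := hirr {S'} ⟨by simpa using hSA', fun h => hSS (h hSA)⟩
    exact lt_of_le_of_lt (le_join (Set.mem_singleton S')) h
  have hBtc : ∀ X ∈ ({W, T'} : Set (Set (Mdl Λ))), IsTorsionClass Λ X := by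
    rintro X (rfl | rfl)
    · exact hWtc
    · exact hT'tc
  have hjtc := join_tc hBtc
  have hM'j : M' ∈ TorsJoin Λ {W, T'} := by
    refine tc_ext' hjtc M' (LinearMap.range f) ?_ ?_
    · apply le_join (Set.mem_insert W {T'})
      exact hWtc.factor_closed M (hSW (self_mem M)) _
        ⟨f.rangeRestrict, f.surjective_rangeRestrict⟩
    · apply le_join (Set.mem_insert_of_mem W (Set.mem_singleton T'))
      exact self_mem Q
  have hjoin : TorsJoin Λ {W, T'} = TorsJoin Λ A := by
    apply Set.Subset.antisymm
    · apply join_le hwtc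
      rintro X (rfl | rfl)
      · exact hWlt.1
      · exact hT'S'.trans hS'lt.1
    · apply join_le hjtc
      intro X hX
      by_cases h : X = S'
      · rw [h]
        exact filt_subset hjtc M' hM'j
      · exact (le_join (A := A \ {S'}) ⟨hX, h⟩).trans (le_join (Set.mem_insert W {T'}))
  have hBirr : TorsIrredundant Λ {W, T'} := by
    intro C hC
    rw [hjoin]
    by_cases hTC : T' ∈ C
    · have hWC : W ∉ C := by
        intro hWC
        apply hC.2
        rintro X (rfl | rfl)
        · exact hWC
        · exact hTC
      refine lt_of_le_of_lt (join_le (filt_tc hfin') ?_) hS'lt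
      intro X hX
      rcases hC.1 hX with h | h
      · exact absurd (h ▸ hX) hWC
      · rw [h]
        exact hT'S'
    · refine lt_of_le_of_lt (join_le hWtc ?_) hWlt
      intro X hX
      rcases hC.1 hX with h | h
      · rw [h]
      · exact absurd (h ▸ hX) hTC
  obtain ⟨b, hb, hle⟩ := hcan _ hBtc hjoin hBirr S' hSA'
  rcases hb with rfl | rfl
  · apply hWlt.2
    apply join_le hWtc
    intro X hX
    by_cases h : X = S'
    · rw [h]
      exact hle
    · exact le_join (A := A \ {S'}) ⟨hX, h⟩
  · obtain ⟨g, hg⟩ := exists_hom (hE M' hM') hQfin (hle (self_mem M'))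
    let g' : (M'.carrier ⧸ LinearMap.range f) →ₗ[Λ] M'.carrier := g
    have hu : g'.comp (LinearMap.range f).mkQ ≠ 0 := by
      intro h0
      apply hg
      apply LinearMap.ext
      intro y
      obtain ⟨x, rfl⟩ := Submodule.mkQ_surjective (LinearMap.range f) y
      exact LinearMap.congr_fun h0 x
    have hi := ((hE M' hM').2.2 _ hu).1
    apply hf
    ext x
    apply hi
    have : (LinearMap.range f).mkQ (f x) = 0 := by
      rw [Submodule.mkQ_apply, Submodule.Quotient.mk_eq_zero]
      exact LinearMap.mem_range_self f x
    rw [LinearMap.comp_apply, this]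
    simp

theorem cjr_of_orth (E : Set (Mdl Λ)) (hE : ∀ M ∈ E, IsBrick Λ M)
    (ho : ∀ M ∈ E, ∀ M' ∈ E, M ≠ M' → HomOrthogonal Λ M M') :
    TorsCJR Λ ((fun M : Mdl Λ => FiltSet Λ (GenSet Λ M)) '' E) := by
  refine ⟨?_, ?_, ?_⟩
  · rintro _ ⟨M, hM, rfl⟩
    exact filt_tc (hE M hM).1
  · intro B hB
    refine ⟨fun X hX T hT => hX T ⟨hT.1, fun S hS => hT.2 S (hB.1 hS)⟩, fun hle => ?_⟩
    obtain ⟨S, ⟨M, hM, rfl⟩, hSB⟩ := Set.not_subset.1 hB.2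
    have h1 := hle (le_join (Set.mem_image_of_mem _ hM) (self_mem M))
    refine brick_not_zs (hE M hM) (join_le (zs_tc False M) ?_ h1)
    intro X hX
    obtain ⟨N, hN, rfl⟩ := hB.1 hX
    refine filt_subset (zs_tc False M) N ⟨(hE N hN).1, fun f => Or.inl ?_⟩
    refine (ho N hN M hM ?_).1 f
    rintro rfl
    exact hSB hX
  · rintro B hB hj - _ ⟨M, hM, rfl⟩
    have hMw := le_join (Set.mem_image_of_mem (fun M : Mdl Λ => FiltSet Λ (GenSet Λ M)) hM)
      (self_mem M)
    have h1 : ¬ ∀ b ∈ B, b ⊆ ZS False M := fun h =>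
      brick_not_zs (hE M hM) (join_le (zs_tc False M) h (hj ▸ hMw))
    push Not at h1
    obtain ⟨b, hb, hbz⟩ := h1
    obtain ⟨X, hXb, hXz⟩ := Set.not_subset.1 hbz
    refine ⟨b, hb, filt_subset (hB b hb) M ?_⟩
    have hX : X ∈ ZS True M := by
      have : X ∈ TorsJoin Λ ((fun M : Mdl Λ => FiltSet Λ (GenSet Λ M)) '' E) :=
        hj ▸ le_join hb hXb
      refine join_le (zs_tc True M) ?_ this
      rintro _ ⟨N, hN, rfl⟩
      apply filt_subset (zs_tc True M) N
      by_cases h : N = M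
      · rw [h]
        exact brick_zs (hE M hM)
      · exact ⟨(hE N hN).1, fun f => Or.inl ((ho N hN M hM h).1 f)⟩
    have : ∃ f : X.carrier →ₗ[Λ] M.carrier, f ≠ 0 := by
      by_contra! hc
      exact hXz ⟨hX.1, fun f => Or.inl (hc f)⟩
    obtain ⟨f, hf⟩ := this
    rcases hX.2 f with h | h
    · exact absurd h hf
    · exact (hB b hb).factor_closed X hXb M ⟨f, h.2⟩

end Helpers

/-- Let `E` be a collection of (pairwise non-isomorphic) bricks over `Λ`.
Then `{Filt(Gen(M)) : M ∈ E}` is a face of the canonical join complex `Γ(tors Λ)`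
(i.e. it is a canonical join representation) if and only if every pair of distinct
modules of `E` is hom-orthogonal. -/
theorem statement3 (k : Type) [Field k] (Λ : Type) [Ring Λ] [Algebra k Λ]
    [FiniteDimensional k Λ] (E : Set (Mdl Λ)) (hE : ∀ M ∈ E, IsBrick Λ M)
    (hnoniso : ∀ M ∈ E, ∀ M' ∈ E, M ≠ M' → ¬ MIso Λ M M') :
    TorsCJR Λ ((fun M : Mdl Λ => FiltSet Λ (GenSet Λ M)) '' E) ↔
      ∀ M ∈ E, ∀ M' ∈ E, M ≠ M' → HomOrthogonal Λ M M' := by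
  constructor
  · intro hC M hM M' hM' hne
    exact ⟨hom_zero E hE hnoniso hC M hM M' hM' hne,
      hom_zero E hE hnoniso hC M' hM' M hM hne.symm⟩
  · exact cjr_of_orth E hE
end

section
/- Let T be a torsion class in mod Λ and M an indecomposable Λ-module not belonging to T such that every proper factor of M lies in T. Then (1) Filt(T ∪ {M}) is a torsion class, and (2) M is a brick. -/
variable (Λ : Type) [Ring Λ]

theorem filt_iso {S : Set (Mdl Λ)} (A B : Mdl Λ) (h : Filt Λ S A)
    (e : A.carrier ≃ₗ[Λ] B.carrier) : Filt Λ S B := by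
  induction h generalizing B with
  | of_subsingleton A h => exact .of_subsingleton B (e.symm.toEquiv.subsingleton)
  | step A N X hX hN e' ih =>
    obtain ⟨e'⟩ := e'
    refine .step B (N.map (e : A.carrier →ₗ[Λ] B.carrier)) X hX
      (ih (Mdl.of Λ _) (e.submoduleMap N)) ⟨?_⟩
    exact (Submodule.Quotient.equiv N _ e rfl).symm.trans e'

theorem filt_factor_s6 {S : Set (Mdl Λ)}
    (hS : ∀ X ∈ S, ∀ Y : Mdl Λ, IsFactor Λ X Y → ∃ Z ∈ S, MIso Λ Y Z)
    (A B : Mdl Λ) (h : Filt Λ S A)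
    (f : A.carrier →ₗ[Λ] B.carrier) (hf : Function.Surjective f) : Filt Λ S B := by
  induction h generalizing B with
  | of_subsingleton A h => exact .of_subsingleton B hf.subsingleton
  | step A N X hX hN e' ih =>
    obtain ⟨e'⟩ := e'
    have hle : N ≤ (N.map f).comap f := Submodule.le_comap_map f N
    obtain ⟨Z, hZ, ⟨e⟩⟩ := hS X hX (Mdl.of Λ (B.carrier ⧸ N.map f))
      ⟨(Submodule.mapQ N (N.map f) f hle).comp (e'.symm : X.carrier →ₗ[Λ] _), by
        have h1 : Function.Surjective (Submodule.mapQ N (N.map f) f hle) := by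
          intro y
          obtain ⟨b, rfl⟩ := Submodule.Quotient.mk_surjective _ y
          obtain ⟨a, rfl⟩ := hf b
          exact ⟨Submodule.Quotient.mk a, rfl⟩
        exact h1.comp e'.symm.surjective⟩
    refine .step B (N.map f) Z hZ (ih (Mdl.of Λ _) (f.submoduleMap N) ?_) ⟨e⟩
    exact f.submoduleMap_surjective N

theorem filt_ext_s6 {S : Set (Mdl Λ)} (A B E : Mdl Λ) (hA : Filt Λ S A) (hB : Filt Λ S B)
    (f : A.carrier →ₗ[Λ] E.carrier) (g : E.carrier →ₗ[Λ] B.carrier)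
    (h : IsSES Λ f g) : Filt Λ S E := by
  induction hB generalizing E with
  | of_subsingleton B hs =>
    obtain ⟨hf, hg, hr⟩ := h
    refine filt_iso Λ A E hA (LinearEquiv.ofBijective f ⟨hf, ?_⟩)
    rw [← LinearMap.range_eq_top, hr, eq_top_iff]
    intro x _
    exact Subsingleton.elim _ _
  | step B N X hX hN e' ih =>
    obtain ⟨e'⟩ := e'
    obtain ⟨hf, hg, hr⟩ := h
    have hgf : ∀ a, g (f a) = 0 := fun a => by
      have : f a ∈ LinearMap.ker g := hr ▸ LinearMap.mem_range_self f a
      exact this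
    have hmem : ∀ a, f a ∈ N.comap g := fun a => by
      rw [Submodule.mem_comap, hgf a]; exact N.zero_mem
    have hsub : ∀ x ∈ N.comap g, g x ∈ N := fun x hx => hx
    refine .step E (N.comap g) X hX (ih (Mdl.of Λ _) (f.codRestrict (N.comap g) hmem)
      (g.restrict hsub) ⟨?_, ?_, ?_⟩) ⟨?_⟩
    · intro a b hab
      exact hf (congrArg Subtype.val hab)
    · rintro ⟨n, hn⟩
      obtain ⟨x, rfl⟩ := hg n
      exact ⟨⟨x, hn⟩, rfl⟩
    · ext ⟨x, hx⟩
      constructor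
      · rintro ⟨a, ha⟩
        have ha' : f a = x := congrArg Subtype.val ha
        subst ha'
        exact Subtype.ext (hgf a)
      · intro hk
        have hk' : x ∈ LinearMap.ker g := congrArg Subtype.val hk
        rw [← hr] at hk'
        obtain ⟨a, ha⟩ := hk'
        exact ⟨a, Subtype.ext ha⟩
    · refine LinearEquiv.trans (LinearEquiv.ofBijective
        (Submodule.mapQ (N.comap g) N g le_rfl) ⟨?_, ?_⟩) e'
      · rw [← LinearMap.ker_eq_bot, eq_bot_iff]
        intro y hy
        obtain ⟨x, rfl⟩ := Submodule.Quotient.mk_surjective _ y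
        have hy' : (Submodule.Quotient.mk (g x) : B.carrier ⧸ N) = 0 := hy
        rw [Submodule.Quotient.mk_eq_zero] at hy'
        exact (Submodule.Quotient.mk_eq_zero _).2 hy'
      · intro y
        obtain ⟨b, rfl⟩ := Submodule.Quotient.mk_surjective _ y
        obtain ⟨a, rfl⟩ := hg b
        exact ⟨Submodule.Quotient.mk a, rfl⟩

theorem filt_fin {S : Set (Mdl Λ)} (hS : ∀ X ∈ S, Module.Finite Λ X.carrier)
    (A : Mdl Λ) (h : Filt Λ S A) : Module.Finite Λ A.carrier := by
  induction h with
  | of_subsingleton A h => infer_instance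
  | step A N X hX hN e' ih =>
    obtain ⟨e'⟩ := e'
    have := hS X hX
    have h1 : Module.Finite Λ (A.carrier ⧸ N) := Module.Finite.equiv e'.symm
    have h2 : Module.Finite Λ N := ih
    exact Module.Finite.of_submodule_quotient N

theorem statement6 (k : Type) [Field k] (Λ : Type) [Ring Λ] [Algebra k Λ]
    [FiniteDimensional k Λ] (T : Set (Mdl Λ)) (hT : IsTorsionClass Λ T)
    (M : Mdl Λ) (hMfin : Module.Finite Λ M.carrier) (hMindec : Indec Λ M)
    (hMnotmem : M ∉ T) (hfac : ∀ N : Mdl Λ, IsProperFactor Λ M N → N ∈ T) :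
    IsTorsionClass Λ (FiltSet Λ (insert M T)) ∧ IsBrick Λ M := by
  refine ⟨⟨?_, ?_, ?_, ?_, ?_⟩, hMfin, hMindec.1, ?_⟩
  · refine filt_fin Λ ?_
    rintro X (rfl | hX)
    · exact hMfin
    · exact hT.fin X hX
  · exact fun A h => .of_subsingleton A h
  · rintro A hA B ⟨e⟩
    exact filt_iso Λ A B hA e
  · rintro A hA B ⟨f, hf⟩
    refine filt_factor_s6 Λ ?_ A B hA f hf
    rintro X (rfl | hX) Y ⟨g, hg⟩
    · by_cases hi : Function.Injective g
      · exact ⟨X, Or.inl rfl, ⟨(LinearEquiv.ofBijective g ⟨hi, hg⟩).symm⟩⟩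
      · exact ⟨Y, Or.inr (hfac Y ⟨g, hg, hi⟩), ⟨LinearEquiv.refl _ _⟩⟩
    · exact ⟨Y, Or.inr (hT.factor_closed X hX Y ⟨g, hg⟩), ⟨LinearEquiv.refl _ _⟩⟩
  · rintro A hA B hB E ⟨f, g, h⟩
    exact filt_ext_s6 Λ A B E hA hB f g h
  · intro f hf0
    have : IsArtinianRing Λ := IsArtinianRing.of_finite k Λ
    have hinj : Function.Injective f := by
      by_contra hni
      refine hMnotmem (hT.ext_closed (Mdl.of Λ (LinearMap.range f)) ?_
        (Mdl.of Λ (M.carrier ⧸ LinearMap.range f)) ?_ M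
        ⟨(LinearMap.range f).subtype, (LinearMap.range f).mkQ,
          Subtype.val_injective, Submodule.mkQ_surjective _, ?_⟩)
      · refine hfac _ ⟨f.rangeRestrict, f.surjective_rangeRestrict, fun h => hni ?_⟩
        intro a b hab
        exact h (Subtype.ext hab)
      · refine hfac _ ⟨(LinearMap.range f).mkQ, Submodule.mkQ_surjective _, fun h => hf0 ?_⟩
        rw [← LinearMap.range_eq_bot, ← Submodule.ker_mkQ (LinearMap.range f)]
        exact LinearMap.ker_eq_bot.2 h
      · exact (Submodule.range_subtype _).trans (Submodule.ker_mkQ _).symm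
    exact ⟨hinj, IsArtinian.surjective_of_injective_endomorphism f hinj⟩
end
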